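/- arXiv:1707.06345 — 2 statements merged into one kernel-verified Lean document; each statement's English description precedes it below -/
import Mathlib

section
/- Let α ∈ (0,1) be irrational, h : 𝕋¹ → ℝ a C^∞ function with Fourier coefficients ĥ(m), and T(x,y) = (x+α, y+h(x) mod 1) on 𝕋² = (ℝ/ℤ)². Fix τ > 0, let E = {k ∈ ℕ : k > 1 and q_{k+1} > q_k^{1/τ+3}} and M = ⋃_{k∈E} {±m q_k : m = 1,…,a_k}, where q_k, a_k are the continued-fraction denominators and partial quotients of α. If M is finite, then for every T-invariant Borel probability measure ρ on 𝕋², the measure complexity of (𝕋²,T,ρ) is weaker than U_τ(n) = n^τ. -/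
open MeasureTheory Filter Real

lemma aux_beta (α : ℝ) (hirr : Irrational α) (hα : α ∈ Set.Ioo (0 : ℝ) 1)
    (a : ℕ → ℕ) (β : ℕ → ℝ) (hβ1 : β 1 = α)
    (hGauss : ∀ k : ℕ, 1 ≤ k → (a k : ℤ) = ⌊1 / β k⌋ ∧ β (k + 1) = 1 / β k - a k) :
    ∀ k, 1 ≤ k → Irrational (β k) ∧ 0 < β k ∧ β k < 1 ∧ 1 ≤ a k := by
  have main : ∀ k, 1 ≤ k → Irrational (β k) ∧ 0 < β k ∧ β k < 1 := by
    intro k hk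
    induction k, hk using Nat.le_induction with
    | base => rw [hβ1]; exact ⟨hirr, hα.1, hα.2⟩
    | succ k hk ih =>
      obtain ⟨h1, h2⟩ := hGauss k hk
      have hi : Irrational (β (k+1)) := by
        rw [h2, one_div]
        exact (irrational_inv_iff.2 ih.1).sub_natCast _
      have ha : (a k : ℝ) = (⌊1 / β k⌋ : ℝ) := by exact_mod_cast h1
      have e : β (k+1) = Int.fract (1 / β k) := by rw [h2, ha]; rfl
      refine ⟨hi, ?_, ?_⟩
      · rcases (Int.fract_nonneg (1 / β k)).lt_or_eq with h | h
        · rw [e]; exact h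
        · exact absurd (e.trans h.symm) hi.ne_zero
      · rw [e]; exact Int.fract_lt_one _
  intro k hk
  obtain ⟨h1, h2, h3⟩ := main k hk
  refine ⟨h1, h2, h3, ?_⟩
  have : (1:ℤ) ≤ a k := by
    rw [(hGauss k hk).1, Int.le_floor]
    rw [le_div_iff₀ h2]; push_cast; linarith
  exact_mod_cast this

/-- numerators of convergents -/
def numer (a : ℕ → ℕ) : ℕ → ℤ
  | 0 => 1
  | 1 => 0
  | (n + 2) => a (n + 1) * numer a (n + 1) + numer a n

lemma aux_q (a q : ℕ → ℕ) (ha : ∀ k, 1 ≤ k → 1 ≤ a k)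
    (hq1 : q 1 = 1) (hq2 : q 2 = a 1)
    (hqrec : ∀ k : ℕ, 2 ≤ k → q (k + 1) = a k * q k + q (k - 1)) :
    (∀ k, 1 ≤ k → 1 ≤ q k) ∧ (∀ k, 1 ≤ k → q k ≤ q (k+1)) ∧ (∀ k, 2 ≤ k → q k < q (k+1)) := by
  have h1 : ∀ k, 1 ≤ k → 1 ≤ q k ∧ 1 ≤ q (k+1) := by
    intro k hk
    induction k, hk using Nat.le_induction with
    | base => exact ⟨hq1.ge, by rw [hq2]; exact ha 1 le_rfl⟩
    | succ k hk ih =>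
      refine ⟨ih.2, ?_⟩
      rw [hqrec (k+1) (by omega)]
      have := ih.1
      simp; omega
  have h3 : ∀ k, 2 ≤ k → q k < q (k+1) := by
    intro k hk
    rw [hqrec k hk]
    have := (h1 (k-1) (by omega)).1
    have := Nat.le_mul_of_pos_left (q k) (ha k (by omega))
    omega
  refine ⟨fun k hk => (h1 k hk).1, fun k hk => ?_, h3⟩
  rcases hk.lt_or_eq with h | h
  · exact (h3 k h).le
  · subst h; rw [hq1]; exact (h1 1 le_rfl).2

lemma aux_approx (α : ℝ) (hirr : Irrational α) (hα : α ∈ Set.Ioo (0 : ℝ) 1)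
    (a : ℕ → ℕ) (β : ℕ → ℝ) (hβ1 : β 1 = α)
    (hGauss : ∀ k : ℕ, 1 ≤ k → (a k : ℤ) = ⌊1 / β k⌋ ∧ β (k + 1) = 1 / β k - a k)
    (q : ℕ → ℕ) (hq1 : q 1 = 1) (hq2 : q 2 = a 1)
    (hqrec : ∀ k : ℕ, 2 ≤ k → q (k + 1) = a k * q k + q (k - 1)) :
    ∀ k, 1 ≤ k → ∃ p : ℤ, IsCoprime p (q k : ℤ) ∧ |α * q k - p| ≤ 1 / q (k+1) := by
  have hb := aux_beta α hirr hα a β hβ1 hGauss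
  have hq := aux_q a q (fun k hk => (hb k hk).2.2.2) hq1 hq2 hqrec
  set p := numer a with hp
  have prec : ∀ k, p (k+2) = a (k+1) * p (k+1) + p k := fun k => by simp [hp, numer]
  have p1 : p 1 = 0 := by simp [hp, numer]
  have p2 : p 2 = 1 := by simp [hp, numer]
  have det : ∀ k, 1 ≤ k → p (k+1) * q k - p k * q (k+1) = 1 ∨
      p (k+1) * q k - p k * q (k+1) = -1 := by
    intro k hk
    induction k, hk using Nat.le_induction with
    | base => left; simp [p1, p2, hq1]
    | succ k hk ih =>
      have e : p (k+1+1) * q (k+1) - p (k+1) * q (k+1+1) = -(p (k+1) * q k - p k * q (k+1)) := by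
        rw [hqrec (k+1) (by omega), prec]; push_cast
        ring
      rw [e]; rcases ih with h | h <;> rw [h] <;> simp
  have inv : ∀ k, 1 ≤ k → α * (q (k+1) + β (k+1) * q k) = p (k+1) + β (k+1) * p k := by
    intro k hk
    induction k, hk using Nat.le_induction with
    | base =>
      have := hb 1 le_rfl
      rw [(hGauss 1 le_rfl).2, hq1, hq2, p1, p2, hβ1]
      have : α ≠ 0 := hα.1.ne'
      push_cast; field_simp; ring
    | succ k hk ih =>
      have h0 := (hb (k+1) (by omega)).2.1.ne'
      rw [(hGauss (k+1) (by omega)).2, hqrec (k+1) (by omega), prec]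
      simp only [Nat.add_sub_cancel]; push_cast
      field_simp
      linarith
  intro k hk
  refine ⟨p k, ?_, ?_⟩
  · rcases det k hk with h | h
    · exact ⟨-q (k+1), p (k+1), by linarith⟩
    · exact ⟨q (k+1), -p (k+1), by linarith⟩
  · have hQ : (0:ℝ) < q (k+1) := by exact_mod_cast hq.1 (k+1) (by omega)
    have hQ' : (0:ℝ) < q k := by exact_mod_cast hq.1 k (by omega)
    have hbk := (hb (k+1) (by omega)).2.1
    have hD : (0:ℝ) < q (k+1) + β (k+1) * q k := by positivity
    have e : (α * q k - p k) * (q (k+1) + β (k+1) * q k) = p (k+1) * q k - p k * q (k+1) := by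
      have := inv k hk
      linear_combination (q k : ℝ) * this
    have e1 : |α * q k - p k| * (q (k+1) + β (k+1) * q k) = 1 := by
      have e2 := congrArg abs e
      rw [abs_mul, abs_of_pos hD] at e2
      rw [e2]
      rcases det k hk with h | h
      · have : (p (k+1) * q k - p k * q (k+1) : ℝ) = 1 := by exact_mod_cast h
        rw [this]; simp
      · have : (p (k+1) * q k - p k * q (k+1) : ℝ) = -1 := by exact_mod_cast h
        rw [this]; simp
    rw [le_div_iff₀ hQ, ← e1]
    gcongr
    have : 0 ≤ β (k+1) * q k := by positivity
    linarith

lemma aux_dioph (α : ℝ) (hirr : Irrational α) (hα : α ∈ Set.Ioo (0 : ℝ) 1)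
    (a : ℕ → ℕ) (β : ℕ → ℝ) (hβ1 : β 1 = α)
    (hGauss : ∀ k : ℕ, 1 ≤ k → (a k : ℤ) = ⌊1 / β k⌋ ∧ β (k + 1) = 1 / β k - a k)
    (q : ℕ → ℕ) (hq1 : q 1 = 1) (hq2 : q 2 = a 1)
    (hqrec : ∀ k : ℕ, 2 ≤ k → q (k + 1) = a k * q k + q (k - 1))
    (τ : ℝ) (E : Set ℕ) (hE : E = {k : ℕ | 1 < k ∧ ((q k : ℝ)) ^ (1 / τ + 3) < (q (k + 1) : ℝ)})
    (M : Set ℤ) (hM : M = {m : ℤ | ∃ k ∈ E, ∃ j : ℕ, 1 ≤ j ∧ j ≤ a k ∧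
      (m = (j * q k : ℕ) ∨ m = -((j * q k : ℕ) : ℤ))})
    (hMfin : M.Finite) :
    ∃ c : ℝ, 0 < c ∧ ∃ S : ℕ, ∀ m : ℤ, m ≠ 0 → ∀ r : ℤ, c ≤ |m * α - r| * |(m:ℝ)| ^ S := by
  have hb := aux_beta α hirr hα a β hβ1 hGauss
  obtain ⟨hqpos, hqmono, hqstrict⟩ := aux_q a q (fun k hk => (hb k hk).2.2.2) hq1 hq2 hqrec
  have happ := aux_approx α hirr hα a β hβ1 hGauss q hq1 hq2 hqrec
  have hsm : StrictMonoOn q (Set.Ici 2) := by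
    apply strictMonoOn_of_lt_add_one Set.ordConnected_Ici
    intro x _ hx _
    exact hqstrict x hx
  have hEfin : E.Finite := by
    refine Set.Finite.of_finite_image (f := fun k => (q k : ℤ)) (hMfin.subset ?_) ?_
    · rintro _ ⟨k, hk, rfl⟩
      rw [hM]
      have : 1 < k := by rw [hE] at hk; exact hk.1
      exact ⟨k, hk, 1, le_rfl, (hb k (by omega)).2.2.2, by simp⟩
    · intro x hx y hy hxy
      rw [hE] at hx hy
      exact hsm.injOn hx.1 hy.1 (by simpa using hxy)
  obtain ⟨K0, hK0⟩ := hEfin.bddAbove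
  set K := max 2 (K0 + 1) with hK
  have hK2 : 2 ≤ K := le_max_left _ _
  obtain ⟨S, hS⟩ := exists_nat_ge (1 / τ + 3)
  have hgrow : ∀ k, K ≤ k → (q (k+1) : ℝ) ≤ (q k : ℝ) ^ S := by
    intro k hk
    have hnot : k ∉ E := fun h => by
      have := hK0 h
      have : K0 + 1 ≤ K := le_max_right _ _
      omega
    rw [hE] at hnot
    have : ¬ ((q k : ℝ)) ^ (1 / τ + 3) < (q (k + 1) : ℝ) := fun h => hnot ⟨by omega, h⟩
    refine (not_lt.1 this).trans ?_
    rw [← Real.rpow_natCast]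
    exact Real.rpow_le_rpow_of_exponent_le (by exact_mod_cast hqpos k (by omega)) hS
  have hlarge : ∀ k, 2 ≤ k → k - 1 ≤ q k := by
    intro k hk
    induction k, hk using Nat.le_induction with
    | base => exact hqpos 2 (by omega)
    | succ k hk ih => have := hqstrict k hk; omega
  have hqK : (0:ℝ) < q K := by exact_mod_cast hqpos K (by omega)
  -- key bound
  have key : ∀ k, 2 ≤ k → ∀ m : ℤ, m ≠ 0 → 2 * |m| ≤ q k → ∀ r : ℤ,
      1 / (2 * (q k : ℝ)) ≤ |m * α - r| := by
    intro k hk m hm hmk r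
    obtain ⟨p, hcop, hp⟩ := happ k (by omega)
    have hQ : (0:ℝ) < q k := by exact_mod_cast hqpos k (by omega)
    have hQ1 : (0:ℝ) < q (k+1) := by exact_mod_cast hqpos (k+1) (by omega)
    have hne : m * p - r * q k ≠ 0 := by
      intro h0
      have hd : (q k : ℤ) ∣ m := by
        apply hcop.symm.dvd_of_dvd_mul_right
        exact ⟨r, by linarith⟩
      have := Int.le_of_dvd (abs_pos.2 hm) ((dvd_abs _ _).2 hd)
      have := abs_pos.2 hm
      omega
    have h1 : (1:ℝ) ≤ |(m * p - r * q k : ℝ)| := by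
      exact_mod_cast Int.one_le_abs hne
    have e : (m * p - r * q k : ℝ) = (m * α - r) * q k - m * (α * q k - p) := by ring
    have h2 : |(m:ℝ) * (α * q k - p)| ≤ 1 / 2 := by
      rw [abs_mul]
      have hm2 : 2 * |(m:ℝ)| ≤ q (k+1) := by
        have : 2 * |(m:ℝ)| ≤ q k := by exact_mod_cast hmk
        have h' : (q k : ℝ) ≤ q (k+1) := by exact_mod_cast hqmono k (by omega)
        linarith
      calc |(m:ℝ)| * |α * q k - p| ≤ |(m:ℝ)| * (1 / q (k+1)) := by gcongr
        _ ≤ 1/2 := by rw [mul_one_div, div_le_iff₀ hQ1]; linarith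
    have h3 := abs_sub ((m * α - r) * q k) (m * (α * q k - p))
    rw [← e, abs_mul, abs_of_pos hQ] at h3
    rw [div_le_iff₀ (by positivity)]
    linarith
  refine ⟨min (1 / (2 * q K)) (1 / (2 * 2 ^ S)), by positivity, S, ?_⟩
  intro m hm r
  have hm1 : (1:ℝ) ≤ |(m:ℝ)| := by exact_mod_cast Int.one_le_abs hm
  have hmS : (1:ℝ) ≤ |(m:ℝ)| ^ S := one_le_pow₀ hm1
  by_cases hcase : 2 * |m| ≤ q K
  · refine (min_le_left _ _).trans ((key K hK2 m hm hcase r).trans ?_)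
    exact le_mul_of_one_le_right (abs_nonneg _) hmS
  · have hex : ∃ j, 2 * |m| ≤ q (K + j) := by
      refine ⟨2 * m.natAbs, ?_⟩
      have := hlarge (K + 2 * m.natAbs) (by omega)
      rw [Int.abs_eq_natAbs]
      omega
    classical
    obtain ⟨j, hj, hjmin⟩ : ∃ j, 2 * |m| ≤ q (K + j) ∧ ∀ i < j, ¬ 2 * |m| ≤ q (K + i) :=
      ⟨Nat.find hex, Nat.find_spec hex, fun i hi => Nat.find_min hex hi⟩
    cases j with
    | zero => exact absurd hj hcase
    | succ j =>
      have h1 := hjmin j (by omega)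
      have h2 : (q (K + j) : ℝ) ≤ 2 * |(m:ℝ)| := by exact_mod_cast (not_le.1 h1).le
      have h3 : (q (K + (j+1)) : ℝ) ≤ (2 * |(m:ℝ)|) ^ S :=
        (hgrow (K + j) (by omega)).trans (by gcongr)
      have hQ : (0:ℝ) < q (K + (j+1)) := by exact_mod_cast hqpos _ (by omega)
      have h4 := key (K + (j+1)) (by omega) m hm hj r
      refine (min_le_right _ _).trans ?_
      rw [div_le_iff₀ (by positivity)] at h4 ⊢
      refine h4.trans ?_
      have : |m * α - r| * (2 * (q (K + (j+1)):ℝ)) ≤ |m * α - r| * (2 * (2 * |(m:ℝ)|) ^ S) := by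
        gcongr
      refine this.trans (le_of_eq ?_)
      rw [mul_pow]; ring

lemma aux_decay (N : ℕ) : ∀ H : ℝ → ℂ, ContDiff ℝ ((⊤ : ℕ∞) : WithTop ℕ∞) H →
    Function.Periodic H 1 →
    ∃ C : ℝ, ∀ m : ℤ, m ≠ 0 →
      ‖fourierCoeffOn (zero_lt_one : (0:ℝ) < 1) H m‖ * |(m:ℝ)| ^ N ≤ C := by
  induction N with
  | zero =>
    intro H hH _
    obtain ⟨C, hC⟩ := (isCompact_Icc (a := (0:ℝ)) (b := 1)).exists_bound_of_continuousOn
      hH.continuous.continuousOn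
    refine ⟨C, fun m _ => ?_⟩
    rw [fourierCoeffOn_eq_integral, pow_zero, mul_one]
    have : ‖∫ x in (0:ℝ)..1, fourier (-m) (x : AddCircle ((1:ℝ) - 0)) • H x‖ ≤ C * |1 - 0| := by
      apply intervalIntegral.norm_integral_le_of_norm_le_const
      intro x hx
      rw [Set.uIoc_of_le zero_le_one] at hx
      rw [norm_smul, fourier_apply, Circle.norm_coe, one_mul]
      exact hC x ⟨hx.1.le, hx.2⟩
    simpa using this
  | succ N ih =>
    intro H hH hper
    have hd : ContDiff ℝ ((⊤ : ℕ∞) : WithTop ℕ∞) (deriv H) := by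
      exact (contDiff_infty_iff_deriv.1 hH).2
    have hdp : Function.Periodic (deriv H) 1 := by
      intro x
      have : (fun y => H (y + 1)) = H := funext hper
      rw [← deriv_comp_add_const, this]
    obtain ⟨C, hC⟩ := ih (deriv H) hd hdp
    refine ⟨C, fun m hm => ?_⟩
    have hdiff : Differentiable ℝ H := hH.differentiable (by simp)
    rw [fourierCoeffOn_of_hasDerivAt (f' := deriv H) zero_lt_one hm
      (fun x _ => (hdiff x).hasDerivAt) (hd.continuous.intervalIntegrable _ _)]
    have h01 : H 1 = H 0 := by simpa using hper 0
    have hm0 : (0:ℝ) < |(m:ℝ)| := by positivity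
    have hpi : (1:ℝ) ≤ 2 * |π| := by rw [abs_of_pos pi_pos]; linarith [pi_gt_three]
    refine le_trans ?_ (hC m hm)
    rw [h01]
    simp only [sub_self, mul_zero, zero_sub, norm_mul, norm_div, norm_neg, norm_one,
      Complex.norm_real, Complex.norm_I, Complex.norm_intCast, Complex.norm_ofNat,
      Complex.ofReal_one, Complex.ofReal_zero, sub_zero, one_mul, mul_one, Real.norm_eq_abs]
    set F := ‖fourierCoeffOn (zero_lt_one : (0:ℝ) < 1) (deriv H) m‖ with hF
    have hF0 : 0 ≤ F := norm_nonneg _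
    rw [pow_succ]
    have : 1 / (2 * |π| * |(m:ℝ)|) * F * (|(m:ℝ)| ^ N * |(m:ℝ)|)
      = (F * |(m:ℝ)| ^ N) / (2 * |π|) := by field_simp
    rw [this]
    exact div_le_self (by positivity) hpi

lemma aux_small_div (α : ℝ) (m : ℤ) :
    4 * |m * α - round (m * α)| ≤ ‖fourier m (α : AddCircle (1:ℝ)) - 1‖ := by
  set r := round (m * α) with hr
  have e : fourier m (α : AddCircle (1:ℝ))
      = Complex.exp (Complex.I * ((2 * π * (m * α - r) : ℝ) : ℂ)) := by
    rw [fourier_coe_apply]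
    rw [show (2 * π * Complex.I * m * α / ((1:ℝ):ℂ) : ℂ)
      = Complex.I * ((2 * π * (m * α - r) : ℝ) : ℂ) + r * (2 * π * Complex.I) by
        push_cast; ring]
    rw [Complex.exp_add, Complex.exp_int_mul_two_pi_mul_I, mul_one]
  rw [e, Complex.norm_exp_I_mul_ofReal_sub_one]
  have h1 : |m * α - r| ≤ 1 / 2 := abs_sub_round _
  have h2 : 2 / π * |π * (m * α - r)| ≤ |sin (π * (m * α - r))| := by
    apply Real.mul_abs_le_abs_sin
    rw [abs_mul, abs_of_pos pi_pos]; nlinarith [pi_pos]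
  rw [abs_mul, abs_of_pos pi_pos] at h2
  rw [show 2 * π * (m * α - r) / 2 = π * (m * α - r) by ring, norm_mul]
  simp only [Real.norm_eq_abs, abs_two]
  have : 2 / π * (π * |m * α - r|) = 2 * |m * α - r| := by field_simp
  linarith

lemma aux_cohom (α : ℝ) (h : AddCircle (1 : ℝ) → ℝ)
    (hsmooth : ContDiff ℝ ((⊤ : ℕ∞) : WithTop ℕ∞) (fun t : ℝ => h ((t : AddCircle (1 : ℝ)))))
    (hd : ∃ c : ℝ, 0 < c ∧ ∃ S : ℕ, ∀ m : ℤ, m ≠ 0 → ∀ r : ℤ, c ≤ |m * α - r| * |(m:ℝ)| ^ S) :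
    ∃ g : AddCircle (1:ℝ) → ℝ, Continuous g ∧ ∃ c : ℝ, ∀ x,
      h x = c + g (x + (α : AddCircle (1:ℝ))) - g x := by
  obtain ⟨c, hc, S, hcS⟩ := hd
  have hcont : Continuous h := by
    rw [show Continuous h ↔ Continuous (h ∘ (QuotientAddGroup.mk : ℝ → AddCircle (1:ℝ))) from
      isQuotientMap_quotient_mk'.continuous_iff]
    exact hsmooth.continuous
  let H : C(AddCircle (1:ℝ), ℂ) := ⟨fun x => (h x : ℂ), by fun_prop⟩
  let H0 : ℝ → ℂ := fun t => (h (t : AddCircle (1:ℝ)) : ℂ)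
  have hH0 : ContDiff ℝ ((⊤ : ℕ∞) : WithTop ℕ∞) H0 :=
    Complex.ofRealCLM.contDiff.comp hsmooth
  have hH0p : Function.Periodic H0 1 := by
    intro x
    simp only [H0, AddCircle.coe_add_period]
  have hco : ∀ m, fourierCoeff H m = fourierCoeffOn (zero_lt_one : (0:ℝ) < 1) H0 m := by
    intro m
    rw [fourierCoeffOn_eq_integral, fourierCoeff_eq_intervalIntegral _ _ 0]
    simp only [fourier_coe_apply]
    norm_num [H, H0]
  obtain ⟨C, hC⟩ := aux_decay (S + 2) H0 hH0 hH0p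
  obtain ⟨C2, hC2⟩ := aux_decay 2 H0 hH0 hH0p
  have hsum2 : Summable fun n : ℤ => 1 / (n:ℝ) ^ 2 := Real.summable_one_div_int_pow.2 one_lt_two
  have hsumc : Summable (fourierCoeff H) := by
    refine Summable.of_norm_bounded_eventually (g := fun n : ℤ => C2 * (1 / (n:ℝ) ^ 2))
      (hsum2.mul_left _) ?_
    filter_upwards [(Set.finite_singleton (0:ℤ)).compl_mem_cofinite] with m hm
    have hm : m ≠ 0 := hm
    have := hC2 m hm
    rw [sq_abs] at this
    have hm2 : (0:ℝ) < (m:ℝ)^2 := by positivity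
    rw [hco, mul_one_div, le_div_iff₀ hm2]
    exact this
  let b : ℤ → ℂ := fun m => fourierCoeff H m / (fourier m (α : AddCircle (1:ℝ)) - 1)
  have hlow : ∀ m : ℤ, m ≠ 0 → 4 * c ≤ ‖fourier m (α : AddCircle (1:ℝ)) - 1‖ * |(m:ℝ)| ^ S := by
    intro m hm
    have h1 := hcS m hm (round (m * α))
    have h2 := mul_le_mul_of_nonneg_right (aux_small_div α m)
      (show (0:ℝ) ≤ |(m:ℝ)| ^ S by positivity)
    linarith
  have hne : ∀ m : ℤ, m ≠ 0 → fourier m (α : AddCircle (1:ℝ)) - 1 ≠ 0 := by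
    intro m hm h0
    have := hlow m hm
    rw [h0] at this
    simp at this
    linarith
  have hb0 : b 0 = 0 := by simp [b]
  have hbsum : Summable fun m => ‖b m‖ := by
    refine Summable.of_norm_bounded_eventually
      (g := fun n : ℤ => C / (4 * c) * (1 / (n:ℝ) ^ 2)) (hsum2.mul_left _) ?_
    filter_upwards [(Set.finite_singleton (0:ℤ)).compl_mem_cofinite] with m hm
    have hm : m ≠ 0 := hm
    have h1 := hC m hm
    rw [← hco] at h1
    have h2 := hlow m hm
    have hD : 0 < ‖fourier m (α : AddCircle (1:ℝ)) - 1‖ := norm_pos_iff.2 (hne m hm)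
    have hm2 : (0:ℝ) < (m:ℝ)^2 := by positivity
    rw [norm_norm, norm_div, div_mul_div_comm, mul_one, div_le_div_iff₀ hD (by positivity)]
    have h3 : ‖fourierCoeff H m‖ * (4 * c * (m:ℝ)^2) ≤
        ‖fourierCoeff H m‖ *
          (‖fourier m (α : AddCircle (1:ℝ)) - 1‖ * |(m:ℝ)| ^ S * (m:ℝ)^2) := by gcongr
    refine h3.trans ?_
    rw [pow_add, sq_abs] at h1
    have := mul_le_mul_of_nonneg_right h1 hD.le
    refine le_trans (le_of_eq ?_) this
    ring
  have hnf : ∀ (m : ℤ) (x : AddCircle (1:ℝ)), ‖fourier m x‖ = 1 := fun m x => Circle.norm_coe _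
  let G : AddCircle (1:ℝ) → ℂ := fun x => ∑' m, b m * fourier m x
  have hGs : ∀ x : AddCircle (1:ℝ), Summable fun m => b m * fourier m x := fun x =>
    Summable.of_norm (by simpa only [norm_mul, hnf, mul_one] using hbsum)
  have hGc : Continuous G := by
    apply continuous_tsum (u := fun m => ‖b m‖) _ hbsum
    · intro m x; rw [norm_mul, hnf, mul_one]
    · intro m; exact continuous_const.mul (fourier m).continuous
  have hGe : ∀ x, H x = fourierCoeff H 0 + (G (x + (α : AddCircle (1:ℝ))) - G x) := by
    intro x
    have s1 := has_pointwise_sum_fourier_series_of_summable hsumc x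
    have s2 := (hGs (x + (α : AddCircle (1:ℝ)))).hasSum.sub (hGs x).hasSum
    have s3 := (hasSum_ite_eq (0:ℤ) (fourierCoeff H 0)).add s2
    refine s1.unique (Eq.mp (congrArg (fun F => HasSum F _) (funext fun m => ?_)) s3)
    have hadd : fourier m (x + (α : AddCircle (1:ℝ)))
        = fourier m x * fourier m (α : AddCircle (1:ℝ)) := by
      simp only [fourier_apply, smul_add, AddCircle.toCircle_add, Circle.coe_mul]
    by_cases hm : m = 0
    · subst hm; simp [hb0]
    · rw [if_neg hm, zero_add, hadd, smul_eq_mul]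
      have e : b m * (fourier m (α : AddCircle (1:ℝ)) - 1) = fourierCoeff H m :=
        div_mul_cancel₀ _ (hne m hm)
      rw [← e]; ring
  refine ⟨fun x => (G x).re, Complex.continuous_re.comp hGc, (fourierCoeff H 0).re, fun x => ?_⟩
  have := congrArg Complex.re (hGe x)
  rw [Complex.add_re, Complex.sub_re] at this
  have e : (H x).re = h x := Complex.ofReal_re _
  rw [e] at this
  simp only [this]; ring

lemma aux_final (α : ℝ) (h : AddCircle (1 : ℝ) → ℝ)
    (T : AddCircle (1 : ℝ) × AddCircle (1 : ℝ) → AddCircle (1 : ℝ) × AddCircle (1 : ℝ))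
    (hT : ∀ p, T p = (p.1 + (α : AddCircle (1 : ℝ)), p.2 + ((h p.1 : ℝ) : AddCircle (1 : ℝ))))
    (g : AddCircle (1:ℝ) → ℝ) (hg : Continuous g) (c : ℝ)
    (hgc : ∀ x, h x = c + g (x + (α : AddCircle (1:ℝ))) - g x) (ε : ℝ) (hε : 0 < ε) :
    ∃ m : ℕ, ∃ xs : Fin m → AddCircle (1 : ℝ) × AddCircle (1 : ℝ), ∀ y, ∃ i, ∀ n : ℕ,
      dist (T^[n] (xs i)) (T^[n] y) < ε := by
  let φ : AddCircle (1 : ℝ) × AddCircle (1 : ℝ) → AddCircle (1 : ℝ) × AddCircle (1 : ℝ) :=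
    fun p => (p.1, p.2 - ((g p.1 : ℝ) : AddCircle (1:ℝ)))
  let ψ : AddCircle (1 : ℝ) × AddCircle (1 : ℝ) → AddCircle (1 : ℝ) × AddCircle (1 : ℝ) :=
    fun p => (p.1, p.2 + ((g p.1 : ℝ) : AddCircle (1:ℝ)))
  have hψφ : ∀ p, ψ (φ p) = p := fun p => by simp [φ, ψ]
  have hφψ : ∀ p, φ (ψ p) = p := fun p => by simp [φ, ψ]
  have hcoe : Continuous fun x => ((g x : ℝ) : AddCircle (1:ℝ)) :=
    (AddCircle.continuous_mk' 1).comp hg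
  have hψ : Continuous ψ := by
    exact continuous_fst.prodMk (continuous_snd.add (hcoe.comp continuous_fst))
  have hstep : ∀ p, φ (T p) = φ p + ((α : AddCircle (1:ℝ)), (c : AddCircle (1:ℝ))) := by
    intro p
    rw [hT]
    simp only [φ, hgc, Prod.mk_add_mk, AddCircle.coe_add, AddCircle.coe_sub]
    congr 1
    abel
  have hiter : ∀ n p, φ (T^[n] p) = φ p + n • ((α : AddCircle (1:ℝ)), (c : AddCircle (1:ℝ))) := by
    intro n
    induction n with
    | zero => intro p; simp
    | succ n ih =>
      intro p
      rw [Function.iterate_succ_apply', hstep, ih, succ_nsmul, add_assoc]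
  have huc := CompactSpace.uniformContinuous_of_continuous hψ
  obtain ⟨δ, hδ, hδε⟩ := Metric.uniformContinuous_iff.1 huc ε hε
  obtain ⟨t, ht, htc⟩ := Metric.totallyBounded_iff.1
    (isCompact_univ (X := AddCircle (1 : ℝ) × AddCircle (1 : ℝ))).totallyBounded δ hδ
  have : Fintype t := ht.fintype
  let e := Fintype.equivFin t
  refine ⟨Fintype.card t, fun i => ψ (e.symm i), fun y => ?_⟩
  have hy := htc (Set.mem_univ (φ y))
  simp only [Set.mem_iUnion, Metric.mem_ball] at hy
  obtain ⟨z, hz, hyz⟩ := hy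
  refine ⟨e ⟨z, hz⟩, fun n => ?_⟩
  rw [← hψφ (T^[n] _), ← hψφ (T^[n] y)]
  apply hδε
  rw [hiter, hiter, dist_add_right]
  beta_reduce
  rw [Equiv.symm_apply_apply, hφψ, dist_comm]
  exact hyz


open MeasureTheory Filter Real

/-- The Bowen-type averaged metric `d̄_n(x,y) = (1/n) ∑_{i=0}^{n-1} d(Tⁱx, Tⁱy)`. -/
noncomputable def dbar {X : Type*} [PseudoMetricSpace X] (T : X → X) (n : ℕ) (x y : X) : ℝ :=
  (∑ i ∈ Finset.range n, dist (T^[i] x) (T^[i] y)) / n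

/-- The measure complexity function `S_n(d,ρ,ε)`. -/
noncomputable def measureComplexity {X : Type*} [PseudoMetricSpace X] [MeasurableSpace X]
    (T : X → X) (ρ : Measure X) (n : ℕ) (ε : ℝ) : ℕ :=
  sInf {m : ℕ | ∃ xs : Fin m → X,
    1 - ε < (ρ (⋃ i, {y | dbar T n (xs i) y < ε})).toReal}

/-- The measure complexity of `(X,T,ρ)` is weaker than `U`. -/
def ComplexityWeakerThan {X : Type*} [PseudoMetricSpace X] [MeasurableSpace X]
    (T : X → X) (ρ : Measure X) (U : ℕ → ℝ) : Prop :=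
  ∀ ε > (0 : ℝ),
    Filter.atTop.liminf (fun n : ℕ => (measureComplexity T ρ n ε : ℝ) / U n) = 0

/-- If the resonant set `M` is finite, then every invariant Borel probability measure of the
smooth skew product `T(x,y) = (x+α, y+h(x) mod 1)` has measure complexity weaker than `n^τ`. -/
theorem complexity_weaker_of_resonant_set_finite
    (α : ℝ) (hirr : Irrational α) (hα : α ∈ Set.Ioo (0 : ℝ) 1)
    (h : AddCircle (1 : ℝ) → ℝ)
    (hsmooth : ContDiff ℝ ((⊤ : ℕ∞) : WithTop ℕ∞) (fun t : ℝ => h ((t : AddCircle (1 : ℝ)))))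
    (T : AddCircle (1 : ℝ) × AddCircle (1 : ℝ) → AddCircle (1 : ℝ) × AddCircle (1 : ℝ))
    (hT : ∀ p, T p = (p.1 + (α : AddCircle (1 : ℝ)), p.2 + ((h p.1 : ℝ) : AddCircle (1 : ℝ))))
    -- the partial quotients `a_k` of `α`, via the Gauss map
    (a : ℕ → ℕ) (β : ℕ → ℝ) (hβ1 : β 1 = α)
    (hGauss : ∀ k : ℕ, 1 ≤ k → (a k : ℤ) = ⌊1 / β k⌋ ∧ β (k + 1) = 1 / β k - a k)
    -- the denominators `q_k` of the convergents of `α`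
    (q : ℕ → ℕ) (hq1 : q 1 = 1) (hq2 : q 2 = a 1)
    (hqrec : ∀ k : ℕ, 2 ≤ k → q (k + 1) = a k * q k + q (k - 1))
    (τ : ℝ) (hτ : 0 < τ)
    (E : Set ℕ) (hE : E = {k : ℕ | 1 < k ∧ ((q k : ℝ)) ^ (1 / τ + 3) < (q (k + 1) : ℝ)})
    (M : Set ℤ) (hM : M = {m : ℤ | ∃ k ∈ E, ∃ j : ℕ, 1 ≤ j ∧ j ≤ a k ∧
      (m = (j * q k : ℕ) ∨ m = -((j * q k : ℕ) : ℤ))})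
    (hMfin : M.Finite)
    (ρ : Measure (AddCircle (1 : ℝ) × AddCircle (1 : ℝ)))
    (hρprob : IsProbabilityMeasure ρ) (hρinv : MeasurePreserving T ρ ρ) :
    ComplexityWeakerThan T ρ (fun n : ℕ => (n : ℝ) ^ τ) := by
  obtain ⟨g, hg, c, hgc⟩ := aux_cohom α h hsmooth
    (aux_dioph α hirr hα a β hβ1 hGauss q hq1 hq2 hqrec τ E hE M hM hMfin)
  intro ε hε
  obtain ⟨m, xs, hxs⟩ := aux_final α h T hT g hg c hgc (ε / 2) (by linarith)
  have hbound : ∀ n, measureComplexity T ρ n ε ≤ m := by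
    intro n
    apply Nat.sInf_le
    refine ⟨xs, ?_⟩
    have hun : (⋃ i, {y | dbar T n (xs i) y < ε}) = Set.univ := by
      refine Set.eq_univ_of_forall fun y => ?_
      obtain ⟨i, hi⟩ := hxs y
      refine Set.mem_iUnion.2 ⟨i, ?_⟩
      have hs : ∑ j ∈ Finset.range n, dist (T^[j] (xs i)) (T^[j] y)
          ≤ ∑ j ∈ Finset.range n, ε / 2 :=
        Finset.sum_le_sum fun j _ => (hi j).le
      rw [Finset.sum_const, Finset.card_range, nsmul_eq_mul] at hs
      have : dbar T n (xs i) y ≤ ε / 2 := by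
        unfold dbar
        apply div_le_of_le_mul₀ (by positivity) (by positivity)
        linarith
      exact lt_of_le_of_lt this (by linarith)
    rw [hun, measure_univ]
    simpa using hε
  apply Tendsto.liminf_eq
  have hlim : Tendsto (fun n : ℕ => (m : ℝ) / (n : ℝ) ^ τ) atTop (nhds 0) :=
    Tendsto.const_div_atTop ((tendsto_rpow_atTop hτ).comp tendsto_natCast_atTop_atTop) _
  refine squeeze_zero (fun n => by positivity) (fun n => ?_) hlim
  have : (measureComplexity T ρ n ε : ℝ) ≤ m := by exact_mod_cast hbound n
  gcongr
end

section
/- Let α ∈ (0,1) be irrational, h : 𝕋¹ → ℝ a C^∞ function with Fourier coefficients ĥ(m), and T(x,y) = (x+α, y+h(x) mod 1) on 𝕋² = (ℝ/ℤ)². Fix τ > 0, let E = {k ∈ ℕ : k > 1 and q_{k+1} > q_k^{1/τ+3}} and M = ⋃_{k∈E} {±m q_k : m = 1,…,a_k}, where q_k, a_k are the continued-fraction denominators and partial quotients of α. If M is infinite, then for every T-invariant Borel probability measure ρ on 𝕋², the measure complexity of (𝕋²,T,ρ) is weaker than U_τ(n) = n^τ. -/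
open MeasureTheory Filter Real

/-- Sums over equally spaced translates decay quickly. -/
theorem aux_decay_s18 (f : ℕ → ℝ → ℝ) (C : ℕ → ℝ)
    (hd : ∀ n x, HasDerivAt (f n) (f (n+1) x) x)
    (hp : ∀ n x, f n (x + 1) = f n x) (hC : ∀ n x, |f n x| ≤ C n)
    (q : ℕ) (hq : 1 ≤ q) (N : ℕ) : ∀ (m : ℕ) (x : ℝ),
    |∑ j ∈ Finset.range q, f (m+1) (x + j / q)| ≤ q * C (m+1+N) / (q:ℝ)^N := by
  have hq0 : (0:ℝ) < q := by exact_mod_cast hq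
  induction N with
  | zero =>
    intro m x
    calc _ ≤ ∑ j ∈ Finset.range q, |f (m+1) (x + j / q)| := Finset.abs_sum_le_sum_abs _ _
      _ ≤ ∑ j ∈ Finset.range q, C (m+1) := Finset.sum_le_sum (fun j _ => hC _ _)
      _ = _ := by simp
  | succ N ih =>
    intro m x
    set G : ℕ → ℝ → ℝ := fun n x => ∑ j ∈ Finset.range q, f n (x + j / q) with hG
    have hGd : ∀ n x, HasDerivAt (G n) (G (n+1) x) x := by
      intro n x
      apply HasDerivAt.fun_sum
      intro j _
      exact (hd n (x + j/q)).comp_add_const x (j/q : ℝ)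
    have hGp : G m (x + 1 / q) = G m x := by
      simp only [hG]
      have e : ∀ j : ℕ, f m (x + 1/q + j/q) = f m (x + ((j+1 : ℕ):ℝ)/q) := by
        intro j; congr 1; push_cast; ring
      rw [Finset.sum_congr rfl (fun j _ => e j)]
      have h1 := Finset.sum_range_succ (fun j : ℕ => f m (x + (j:ℝ)/q)) q
      have h2 := Finset.sum_range_succ' (fun j : ℕ => f m (x + (j:ℝ)/q)) q
      have h3 : f m (x + (q:ℝ)/q) = f m (x + ((0:ℕ):ℝ)/q) := by
        rw [div_self hq0.ne', hp]; simp
      linarith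
    have hlt : x < x + 1 / q := by have := one_div_pos.mpr hq0; linarith
    obtain ⟨c, hc, hc0⟩ := exists_hasDerivAt_eq_zero hlt
      (fun y _ => (hGd m y).continuousAt.continuousWithinAt) hGp.symm (fun y _ => hGd m y)
    set B := (q:ℝ) * C (m+1+1+N) / (q:ℝ)^N
    have hL := Convex.norm_image_sub_le_of_norm_hasDerivWithin_le (C := B) (s := Set.univ)
      (f := G (m+1)) (f' := G (m+2)) (x := c) (y := x)
      (fun y _ => (hGd (m+1) y).hasDerivWithinAt) (fun y _ => ih (m+1) y) convex_univ
      (Set.mem_univ _) (Set.mem_univ _)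
    rw [hc0, sub_zero, Real.norm_eq_abs, Real.norm_eq_abs] at hL
    have hB : 0 ≤ B := (abs_nonneg _).trans (ih (m+1) x)
    have hxc : |x - c| ≤ 1 / q := by
      rw [abs_le]; constructor <;> linarith [hc.1, hc.2]
    calc |G (m+1) x| ≤ B * |x - c| := hL
      _ ≤ B * (1/q) := by gcongr
      _ = _ := by
        simp only [B]; rw [show m+1+1+N = m+1+(N+1) by ring]; field_simp; ring

theorem aux_perm (F : ℝ → ℝ) (hF : ∀ x, F (x + 1) = F x) (p q : ℕ) (hq : 1 ≤ q)
    (hpq : Nat.Coprime p q) (x : ℝ) :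
    ∑ i ∈ Finset.range q, F (x + i * p / q) = ∑ j ∈ Finset.range q, F (x + j / q) := by
  have hq0 : (0:ℝ) < q := by exact_mod_cast hq
  have hinj : Set.InjOn (fun i => (i * p) % q) (Finset.range q : Set ℕ) := by
    intro i hi j hj hij
    have h1 : i * p ≡ j * p [MOD q] := hij
    have h2 : i ≡ j [MOD q] := Nat.ModEq.cancel_right_of_coprime (by rwa [Nat.coprime_comm] at hpq) h1
    simp at hi hj
    exact Nat.ModEq.eq_of_lt_of_lt h2 hi hj
  have hmaps : Set.MapsTo (fun i => (i * p) % q) (Finset.range q : Set ℕ) (Finset.range q : Set ℕ) := by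
    intro i _; simp; exact Nat.mod_lt _ hq
  refine Finset.sum_nbij (fun i => (i * p) % q) (fun i hi => by simpa using Nat.mod_lt _ hq) hinj
    (Finset.surjOn_of_injOn_of_card_le _ hmaps hinj le_rfl) ?_
  intro i _
  have hper : Function.Periodic F 1 := hF
  have h1 : x + (i:ℝ) * p / q = x + ((i * p % q : ℕ):ℝ) / q + ((i * p / q : ℕ):ℝ) * 1 := by
    have := Nat.mod_add_div (i*p) q
    have h2 : ((i * p % q : ℕ):ℝ) + q * ((i * p / q : ℕ):ℝ) = i * p := by exact_mod_cast this
    rw [← h2]; field_simp; ring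
  rw [h1]
  exact hper.nat_mul _ _

theorem aux_birkhoff (f : ℕ → ℝ → ℝ) (C : ℕ → ℝ)
    (hd : ∀ n x, HasDerivAt (f n) (f (n+1) x) x)
    (hp : ∀ n x, f n (x + 1) = f n x) (hC : ∀ n x, |f n x| ≤ C n)
    (α : ℝ) (p q s : ℕ) (hq : 1 ≤ q) (hpq : Nat.Coprime p q)
    (happ : |q * α - p| ≤ 1 / (q:ℝ)^s) (i : ℕ) (hi : i < q ^ s) (x : ℝ) :
    |∑ j ∈ Finset.range i, f 1 (x + j * α)| ≤ (C 1 + C 2 + C (s+1)) * q := by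
  have hq0 : (0:ℝ) < q := by exact_mod_cast hq
  have hC0 : ∀ n, 0 ≤ C n := fun n => (abs_nonneg _).trans (hC n 0)
  have hqs : (0:ℝ) < (q:ℝ)^s := by positivity
  set D := (C 2 + C (s+1)) * q / (q:ℝ)^s with hD
  have hlip : ∀ y z, |f 1 y - f 1 z| ≤ C 2 * |y - z| := by
    intro y z
    exact Convex.norm_image_sub_le_of_norm_hasDerivWithin_le (C := C 2) (s := Set.univ)
      (f := f 1) (f' := f 2) (x := z) (y := y)
      (fun y _ => (hd 1 y).hasDerivWithinAt) (fun y _ => hC 2 y) convex_univ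
      (Set.mem_univ _) (Set.mem_univ _)
  have hSq : ∀ x, |∑ j ∈ Finset.range q, f 1 (x + j * α)| ≤ D := by
    intro x
    have h1 := aux_decay_s18 f C hd hp hC q hq s 0 x
    rw [← aux_perm (f 1) (hp 1) p q hq hpq] at h1
    have h2 : |∑ j ∈ Finset.range q, (f 1 (x + j * α) - f 1 (x + j * p / q))|
        ≤ q * (C 2 * (1 / (q:ℝ)^s)) := by
      calc _ ≤ ∑ j ∈ Finset.range q, |f 1 (x + j * α) - f 1 (x + j * p / q)| :=
            Finset.abs_sum_le_sum_abs _ _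
        _ ≤ ∑ j ∈ Finset.range q, C 2 * (1 / (q:ℝ)^s) := by
            apply Finset.sum_le_sum
            intro j hj
            refine (hlip _ _).trans ?_
            have hj' : (j:ℝ) ≤ q := by exact_mod_cast (Finset.mem_range.mp hj).le
            have : x + j * α - (x + j * p / q) = (j / q) * (q * α - p) := by field_simp; ring
            rw [this, abs_mul]
            have h3 : |(j:ℝ)/q| ≤ 1 := by
              rw [abs_of_nonneg (by positivity)]; exact (div_le_one hq0).mpr hj'
            have h4 : |(j:ℝ)/q| * |q * α - p| ≤ 1 * (1 / (q:ℝ)^s) := by gcongr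
            rw [one_mul] at h4
            exact mul_le_mul_of_nonneg_left h4 (hC0 2)
        _ = _ := by simp
    rw [Finset.sum_sub_distrib] at h2
    rw [show 0 + 1 + s = s + 1 by ring] at h1
    have h5 : D = q * (C 2 * (1 / (q:ℝ)^s)) + q * C (s+1) / (q:ℝ)^s := by
      rw [hD]; field_simp
    rw [h5]
    rw [abs_le] at *
    constructor <;> linarith [h1.1, h1.2, h2.1, h2.2]
  have key : ∀ (l r : ℕ) (x : ℝ),
      |∑ j ∈ Finset.range (l * q + r), f 1 (x + j * α)| ≤ l * D + r * C 1 := by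
    intro l r
    induction l with
    | zero =>
      intro x
      simp only [Nat.zero_mul, zero_add]
      calc _ ≤ ∑ j ∈ Finset.range r, |f 1 (x + j * α)| := Finset.abs_sum_le_sum_abs _ _
        _ ≤ ∑ j ∈ Finset.range r, C 1 := Finset.sum_le_sum (fun j _ => hC _ _)
        _ = _ := by simp
    | succ l ih =>
      intro x
      rw [show (l+1)*q + r = q + (l*q + r) by ring, Finset.sum_range_add]
      have e : ∀ j : ℕ, f 1 (x + ((q + j : ℕ):ℝ) * α) = f 1 ((x + q * α) + j * α) := by
        intro j; congr 1; push_cast; ring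
      rw [Finset.sum_congr rfl (fun j _ => e j)]
      refine (abs_add_le _ _).trans ?_
      have := ih (x + q * α)
      have := hSq x
      push_cast
      linarith
  have h1 := key (i / q) (i % q) x
  rw [Nat.div_add_mod'] at h1
  refine h1.trans ?_
  have hr : ((i % q : ℕ):ℝ) ≤ q := by exact_mod_cast (Nat.mod_lt _ hq).le
  have hl : ((i / q : ℕ):ℝ) ≤ (q:ℝ)^s := by
    exact_mod_cast (Nat.div_le_self i q).trans hi.le
  have h2 : ((i / q : ℕ):ℝ) * D ≤ (q:ℝ)^s * D := by
    have : 0 ≤ D := (abs_nonneg _).trans (hSq 0)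
    gcongr
  have h3 : (q:ℝ)^s * D = (C 2 + C (s+1)) * q := by rw [hD]; field_simp
  have h4 : ((i % q : ℕ):ℝ) * C 1 ≤ q * C 1 := mul_le_mul_of_nonneg_right hr (hC0 1)
  linarith

/-- Continued fraction facts. -/
theorem aux_cf (α : ℝ) (hirr : Irrational α) (hα : α ∈ Set.Ioo (0 : ℝ) 1)
    (a : ℕ → ℕ) (β : ℕ → ℝ) (hβ1 : β 1 = α)
    (hGauss : ∀ k : ℕ, 1 ≤ k → (a k : ℤ) = ⌊1 / β k⌋ ∧ β (k + 1) = 1 / β k - a k)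
    (q : ℕ → ℕ) (hq1 : q 1 = 1) (hq2 : q 2 = a 1)
    (hqrec : ∀ k : ℕ, 2 ≤ k → q (k + 1) = a k * q k + q (k - 1)) :
    (∀ k, 2 ≤ k → 1 ≤ q k ∧ k ≤ q k + 1) ∧
    ∀ k, 2 ≤ k → ∃ p : ℕ, Nat.Coprime p (q k) ∧ |q k * α - p| * q (k+1) ≤ 1 := by
  have hβ : ∀ k, 1 ≤ k → Irrational (β k) ∧ 0 < β k ∧ β k < 1 := by
    intro k hk
    induction k, hk using Nat.le_induction with
    | base => rw [hβ1]; exact ⟨hirr, hα.1, hα.2⟩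
    | succ k hk ih =>
      obtain ⟨h1, h2⟩ := hGauss k hk
      have hfr : β (k+1) = Int.fract (1 / β k) := by
        rw [h2, Int.fract, ← h1]; simp
      have hir : Irrational (β (k+1)) := by
        rw [h2, one_div]
        exact (irrational_inv_iff.mpr ih.1).sub_natCast _
      refine ⟨hir, ?_, ?_⟩
      · rw [hfr] at hir ⊢
        exact lt_of_le_of_ne (Int.fract_nonneg _) (fun h => hir ⟨0, by simpa using h⟩)
      · rw [hfr]; exact Int.fract_lt_one _
  have ha : ∀ k, 1 ≤ k → 1 ≤ a k := by
    intro k hk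
    have h1 := (hGauss k hk).1
    have h2 : (1:ℤ) ≤ ⌊1 / β k⌋ := by
      rw [Int.le_floor]; push_cast
      rw [le_div_iff₀ (hβ k hk).2.1]; linarith [(hβ k hk).2.2]
    omega
  have hq : ∀ k, 1 ≤ k → 1 ≤ q k ∧ 1 ≤ q (k+1) ∧ k + 1 ≤ q (k+1) + 1 := by
    intro k hk
    induction k, hk using Nat.le_induction with
    | base => have := ha 1 le_rfl; simp only [hq1, Nat.reduceAdd, hq2]; omega
    | succ k hk ih =>
      have h1 := hqrec (k+1) (by omega)
      have h2 := ha (k+1) (by omega)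
      simp only [Nat.add_sub_cancel] at h1
      have h3 : q (k+1) ≤ a (k+1) * q (k+1) := Nat.le_mul_of_pos_left _ h2
      omega
  refine ⟨fun k hk => ?_, ?_⟩
  · obtain ⟨j, rfl⟩ : ∃ j, k = j + 1 := ⟨k-1, by omega⟩
    exact (hq j (by omega)).2
  -- numerators
  have hex : ∀ k, 1 ≤ k → ∃ p p' : ℕ,
      ((q (k+1) : ℝ) * α - p' = - β (k+1) * (q k * α - p)) ∧
      |(q (k+1) : ℤ) * p - q k * p'| = 1 := by
    intro k hk
    induction k, hk using Nat.le_induction with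
    | base =>
      refine ⟨0, 1, ?_, ?_⟩
      · have := (hGauss 1 le_rfl).2
        rw [this, hβ1]; simp only [hq1, Nat.reduceAdd, hq2]
        have : α ≠ 0 := hα.1.ne'
        push_cast; field_simp; ring
      · simp [hq1]
    | succ k hk ih =>
      obtain ⟨p, p', h1, h2⟩ := ih
      have h3 := hqrec (k+1) (by omega)
      simp only [Nat.add_sub_cancel] at h3
      refine ⟨p', a (k+1) * p' + p, ?_, ?_⟩
      · have h4 := (hGauss (k+1) (by omega)).2
        have h5 := (hβ (k+1) (by omega)).2.1.ne'
        have h6 : (q k * α - p) = -(1 / β (k+1)) * ((q (k+1) : ℝ) * α - p') := by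
          rw [h1]; field_simp
        rw [h3, h4]; push_cast
        linear_combination h6
      · rw [h3, ← h2, ← abs_neg]; push_cast; congr 1; ring
  intro k hk
  obtain ⟨p, p', h1, h2⟩ := hex k (by omega)
  refine ⟨p, ?_, ?_⟩
  · rw [← Nat.isCoprime_iff_coprime]
    rcases abs_eq (zero_le_one) |>.mp h2 with h | h
    · exact ⟨q (k+1), -p', by linarith⟩
    · exact ⟨-q (k+1), p', by linarith⟩
  · have h3 : |(q k * α - p) * (q (k+1) + β (k+1) * q k)| = 1 := by
      have : (q k * α - p) * (q (k+1) + β (k+1) * q k)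
        = -(((q (k+1) : ℤ) * p - q k * p' : ℤ) : ℝ) := by
        push_cast; linear_combination (q k : ℝ) * h1
      rw [this, abs_neg, ← Int.cast_abs, h2]; simp
    have hb := (hβ (k+1) (by omega)).2.1
    have h5 : (0:ℝ) ≤ β (k+1) * q k := by positivity
    rw [abs_mul, abs_of_nonneg (by positivity : (0:ℝ) ≤ q (k+1) + β (k+1) * q k)] at h3
    nlinarith [abs_nonneg (q k * α - p)]

theorem aux_dist (x y : ℝ) : dist (x : AddCircle (1:ℝ)) (y : AddCircle (1:ℝ)) ≤ |x - y| := by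
  rw [dist_eq_norm, ← AddCircle.coe_sub]
  exact (QuotientAddGroup.norm_mk_le_norm)

theorem aux_grid (x : AddCircle (1:ℝ)) (m : ℕ) (hm : 0 < m) :
    ∃ (t : ℝ) (j : Fin m), x = (t : AddCircle (1:ℝ)) ∧ |(j:ℝ)/m - t| ≤ 1 / m := by
  have hm0 : (0:ℝ) < m := by exact_mod_cast hm
  obtain ⟨t, rfl⟩ := QuotientAddGroup.mk_surjective x
  have h0 := Int.fract_nonneg t
  have h1 := Int.fract_lt_one t
  have hlt : ⌊Int.fract t * m⌋₊ < m := by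
    rw [Nat.floor_lt (by positivity)]; nlinarith
  refine ⟨Int.fract t, ⟨_, hlt⟩, ?_, ?_⟩
  · have : Function.Periodic (fun t : ℝ => (t : AddCircle (1:ℝ))) 1 := by
      intro t; simp
    have h2 := this.sub_int_mul_eq (x := t) ⌊t⌋
    rw [mul_one] at h2
    exact h2.symm
  · have h2 := Nat.floor_le (show 0 ≤ Int.fract t * m by positivity)
    have h3 := Nat.lt_floor_add_one (Int.fract t * m)
    simp only
    rw [show (⌊Int.fract t * m⌋₊ : ℝ)/m - Int.fract t
      = ((⌊Int.fract t * m⌋₊ : ℝ) - Int.fract t * m) / m by field_simp, abs_div, abs_of_pos hm0]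
    gcongr
    rw [abs_le]; constructor <;> linarith

theorem aux_count
    (α : ℝ) (h : AddCircle (1 : ℝ) → ℝ) (f1 : ℝ → ℝ)
    (hd : ∀ t : ℝ, HasDerivAt (fun t : ℝ => h ((t : AddCircle (1 : ℝ)))) (f1 t) t)
    (T : AddCircle (1 : ℝ) × AddCircle (1 : ℝ) → AddCircle (1 : ℝ) × AddCircle (1 : ℝ))
    (hT : ∀ p, T p = (p.1 + (α : AddCircle (1 : ℝ)), p.2 + ((h p.1 : ℝ) : AddCircle (1 : ℝ))))
    (ρ : Measure (AddCircle (1 : ℝ) × AddCircle (1 : ℝ)))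
    (hρprob : IsProbabilityMeasure ρ) (ε B : ℝ) (hε : 0 < ε) (q n K : ℕ) (hq : 1 ≤ q) (hn : 1 ≤ n)
    (hB : ∀ i < n, ∀ x, |∑ j ∈ Finset.range i, f1 (x + j * α)| ≤ B * q)
    (hK0 : 0 < K) (hK : (1 + B) / K < ε) :
    measureComplexity T ρ n ε ≤ (K * q) * K := by
  have hq0 : (1:ℝ) ≤ q := by exact_mod_cast hq
  have hKr : (0:ℝ) < K := by exact_mod_cast hK0
  have hB0 : 0 ≤ B := by
    have := hB 0 hn 0
    simp at this
    nlinarith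
  have hiter : ∀ (i : ℕ) (t u : ℝ), T^[i] ((t : AddCircle (1:ℝ)), (u : AddCircle (1:ℝ))) =
      (((t + i * α : ℝ) : AddCircle (1:ℝ)),
        ((u + ∑ j ∈ Finset.range i, h ((t + j * α : ℝ) : AddCircle (1:ℝ)) : ℝ) : AddCircle (1:ℝ))) := by
    intro i t u
    induction i with
    | zero => simp
    | succ i ih =>
      rw [Function.iterate_succ_apply', ih, hT, Finset.sum_range_succ]
      simp only [← AddCircle.coe_add]
      congr 2
      · push_cast; ring
      · ring
  have hclose : ∀ i < n, ∀ t t' u u' : ℝ, |t - t'| ≤ 1 / ((K * q : ℕ):ℝ) → |u - u'| ≤ 1 / K →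
      dist (T^[i] ((t : AddCircle (1:ℝ)), (u : AddCircle (1:ℝ))))
        (T^[i] ((t' : AddCircle (1:ℝ)), (u' : AddCircle (1:ℝ)))) ≤ (1 + B) / K := by
    intro i hi t t' u u' ht hu
    rw [hiter, hiter, Prod.dist_eq]
    have hkq : 1 / ((K * q : ℕ):ℝ) = 1 / K / q := by push_cast; field_simp
    rw [hkq] at ht
    have h1K : 1 / K / (q:ℝ) ≤ 1 / K := div_le_self (by positivity) hq0
    have hBK : 0 ≤ B / K := by positivity
    have hsplit : (1 + B) / K = 1 / K + B / K := by ring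
    rw [hsplit]
    apply max_le
    · refine (aux_dist _ _).trans ?_
      rw [show t + i * α - (t' + i * α) = t - t' by ring]
      linarith
    · refine (aux_dist _ _).trans ?_
      set S : ℝ → ℝ := fun t => ∑ j ∈ Finset.range i, h ((t + j * α : ℝ) : AddCircle (1:ℝ))
      have hS : ∀ x, HasDerivAt S (∑ j ∈ Finset.range i, f1 (x + j * α)) x := by
        intro x
        apply HasDerivAt.fun_sum
        intro j _
        exact (hd (x + j * α)).comp_add_const x (j * α : ℝ)
      have hL := Convex.norm_image_sub_le_of_norm_hasDerivWithin_le (C := B * q) (s := Set.univ)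
        (f := S) (x := t') (y := t)
        (fun y _ => (hS y).hasDerivWithinAt) (fun y _ => hB i hi y) convex_univ
        (Set.mem_univ _) (Set.mem_univ _)
      rw [Real.norm_eq_abs, Real.norm_eq_abs] at hL
      have h2 : B * q * |t - t'| ≤ B * q * (1 / K / q) := by gcongr
      have h3 : B * q * (1 / K / q) = B / K := by field_simp
      calc |u + S t - (u' + S t')| = |(u - u') + (S t - S t')| := by congr 1; ring
        _ ≤ |u - u'| + |S t - S t'| := abs_add_le _ _
        _ ≤ _ := by linarith
  have hKq : 0 < K * q := by positivity
  apply Nat.sInf_le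
  refine ⟨fun i => ((((finProdFinEquiv.symm i).1 : ℕ) / ((K * q : ℕ):ℝ) : ℝ),
    (((finProdFinEquiv.symm i).2 : ℕ) / (K:ℝ) : ℝ)), ?_⟩
  have hun : (⋃ i : Fin ((K * q) * K), {y | dbar T n ((((((finProdFinEquiv.symm i).1 : ℕ) / ((K * q : ℕ):ℝ) : ℝ)) : AddCircle (1:ℝ)),
    (((((finProdFinEquiv.symm i).2 : ℕ) / (K:ℝ) : ℝ)) : AddCircle (1:ℝ))) y < ε}) = Set.univ := by
    rw [Set.eq_univ_iff_forall]
    rintro ⟨x, y⟩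
    obtain ⟨t, j, rfl, hj⟩ := aux_grid x (K * q) hKq
    obtain ⟨u, l, rfl, hl⟩ := aux_grid y K hK0
    rw [Set.mem_iUnion]
    refine ⟨finProdFinEquiv (j, l), ?_⟩
    simp only [Equiv.symm_apply_apply, Set.mem_setOf_eq]
    unfold dbar
    have hn0 : (0:ℝ) < n := by exact_mod_cast hn
    rw [div_lt_iff₀ hn0]
    calc _ ≤ ∑ i ∈ Finset.range n, (1 + B) / K :=
          Finset.sum_le_sum (fun i hi => hclose i (Finset.mem_range.mp hi) _ _ _ _ hj hl)
      _ = n * ((1 + B) / K) := by simp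
      _ < ε * n := by nlinarith
  rw [hun]
  simp [hε]

/-- If the resonant set `M` is infinite, then every invariant Borel probability measure of the
smooth skew product `T(x,y) = (x+α, y+h(x) mod 1)` has measure complexity weaker than `n^τ`. -/
theorem complexity_weaker_of_resonant_set_infinite
    (α : ℝ) (hirr : Irrational α) (hα : α ∈ Set.Ioo (0 : ℝ) 1)
    (h : AddCircle (1 : ℝ) → ℝ)
    (hsmooth : ContDiff ℝ ((⊤ : ℕ∞) : WithTop ℕ∞) (fun t : ℝ => h ((t : AddCircle (1 : ℝ)))))
    (T : AddCircle (1 : ℝ) × AddCircle (1 : ℝ) → AddCircle (1 : ℝ) × AddCircle (1 : ℝ))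
    (hT : ∀ p, T p = (p.1 + (α : AddCircle (1 : ℝ)), p.2 + ((h p.1 : ℝ) : AddCircle (1 : ℝ))))
    -- the partial quotients `a_k` of `α`, via the Gauss map
    (a : ℕ → ℕ) (β : ℕ → ℝ) (hβ1 : β 1 = α)
    (hGauss : ∀ k : ℕ, 1 ≤ k → (a k : ℤ) = ⌊1 / β k⌋ ∧ β (k + 1) = 1 / β k - a k)
    -- the denominators `q_k` of the convergents of `α`
    (q : ℕ → ℕ) (hq1 : q 1 = 1) (hq2 : q 2 = a 1)
    (hqrec : ∀ k : ℕ, 2 ≤ k → q (k + 1) = a k * q k + q (k - 1))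
    (τ : ℝ) (hτ : 0 < τ)
    (E : Set ℕ) (hE : E = {k : ℕ | 1 < k ∧ ((q k : ℝ)) ^ (1 / τ + 3) < (q (k + 1) : ℝ)})
    (M : Set ℤ) (hM : M = {m : ℤ | ∃ k ∈ E, ∃ j : ℕ, 1 ≤ j ∧ j ≤ a k ∧
      (m = (j * q k : ℕ) ∨ m = -((j * q k : ℕ) : ℤ))})
    (hMinf : M.Infinite)
    (ρ : Measure (AddCircle (1 : ℝ) × AddCircle (1 : ℝ)))
    (hρprob : IsProbabilityMeasure ρ) (hρinv : MeasurePreserving T ρ ρ) :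
    ComplexityWeakerThan T ρ (fun n : ℕ => (n : ℝ) ^ τ) := by
  obtain ⟨hqpos, hcf⟩ := aux_cf α hirr hα a β hβ1 hGauss q hq1 hq2 hqrec
  -- `E` is infinite
  have hEinf : E.Infinite := by
    intro hfin
    apply hMinf
    have hsub : M ⊆ ⋃ k ∈ E, ⋃ j ∈ Set.Iic (a k),
        ({((j * q k : ℕ) : ℤ), -((j * q k : ℕ) : ℤ)} : Set ℤ) := by
      intro m hm
      rw [hM] at hm
      obtain ⟨k, hk, j, _, hj, hm⟩ := hm
      simp only [Set.mem_iUnion]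
      exact ⟨k, hk, j, hj, by simpa using hm⟩
    refine Set.Finite.subset ?_ hsub
    refine hfin.biUnion (fun k _ => (Set.finite_Iic (a k)).biUnion (fun j _ => ?_))
    exact Set.toFinite _
  -- derivatives of the lift
  set g : ℝ → ℝ := fun t : ℝ => h ((t : AddCircle (1 : ℝ))) with hg
  set f : ℕ → ℝ → ℝ := fun n => iteratedDeriv n g with hf
  have hd : ∀ n x, HasDerivAt (f n) (f (n+1) x) x := by
    intro n x
    have h1 : Differentiable ℝ (iteratedDeriv n g) :=
      hsmooth.differentiable_iteratedDeriv n (by exact_mod_cast WithTop.coe_lt_top _)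
    simp only [hf, iteratedDeriv_succ]
    exact (h1 x).hasDerivAt
  have hp : ∀ n x, f n (x + 1) = f n x := by
    intro n
    induction n with
    | zero => intro x; simp [hf, hg]
    | succ n ih =>
      intro x
      have h1 := (hd n (x+1)).comp_add_const x 1
      have h2 : (fun y => f n (y + 1)) = f n := funext ih
      rw [h2] at h1
      exact h1.unique (hd n x)
  have hCex : ∀ n, ∃ C, ∀ x, |f n x| ≤ C := by
    intro n
    have hcont : Continuous (f n) := continuous_iff_continuousAt.mpr (fun x => (hd n x).continuousAt)
    obtain ⟨C, hC⟩ := isCompact_Icc.exists_bound_of_continuousOn (s := Set.Icc (0:ℝ) 1) hcont.continuousOn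
    refine ⟨C, fun x => ?_⟩
    have hper : Function.Periodic (f n) 1 := hp n
    obtain ⟨y, hy, hxy⟩ := hper.exists_mem_Ico₀ one_pos x
    rw [hxy]
    exact hC y ⟨hy.1, hy.2.le⟩
  choose C hC using hCex
  set s : ℕ := ⌊1/τ⌋₊ + 1 with hs
  have hs1 : 1 / τ < s := by rw [hs]; push_cast; exact Nat.lt_floor_add_one _
  have hs2 : (s:ℝ) ≤ 1 / τ + 3 := by
    have := Nat.floor_le (show 0 ≤ 1/τ by positivity)
    rw [hs]; push_cast; linarith
  intro ε hε
  have hnn : ∀ n : ℕ, 0 ≤ (measureComplexity T ρ n ε : ℝ) / (n:ℝ) ^ τ := fun n => by positivity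
  set B := C 1 + C 2 + C (s+1) with hBdef
  obtain ⟨K, hK⟩ := exists_nat_gt (max 0 ((1 + B) / ε))
  have hK0 : (0:ℝ) < K := lt_of_le_of_lt (le_max_left _ _) hK
  have hK1 : (1 + B) / K < ε := by
    have := lt_of_le_of_lt (le_max_right _ _) hK
    rw [div_lt_iff₀ hε] at this
    rw [div_lt_iff₀ hK0]; linarith
  have hK0' : 0 < K := by exact_mod_cast hK0
  have hexp : 0 < s * τ - 1 := by
    rw [div_lt_iff₀ hτ] at hs1; linarith
  -- bound along `E`
  have hbound : ∀ k ∈ E, (measureComplexity T ρ (q k ^ s) ε : ℝ) / ((q k ^ s : ℕ):ℝ) ^ τ ≤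
      (K:ℝ)^2 * (q k : ℝ) ^ (-(s * τ - 1)) := by
    intro k hk
    rw [hE] at hk
    obtain ⟨hk1, hk2⟩ := hk
    have hqk := (hqpos k hk1).1
    have hqr : (1:ℝ) ≤ q k := by exact_mod_cast hqk
    have hq0 : (0:ℝ) < q k := by linarith
    obtain ⟨p, hpc, hpa⟩ := hcf k hk1
    have hle : (q k : ℝ)^s ≤ q (k+1) := by
      rw [← Real.rpow_natCast]
      exact (Real.rpow_le_rpow_of_exponent_le hqr hs2).trans hk2.le
    have happ : |q k * α - p| ≤ 1 / (q k:ℝ)^s := by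
      rw [le_div_iff₀ (by positivity)]
      exact (mul_le_mul_of_nonneg_left hle (abs_nonneg _)).trans hpa
    have h1 := aux_count α h (f 1) (fun t => by
      have h0 := hd 0 t
      rwa [show f 0 = g from iteratedDeriv_zero] at h0) T hT ρ hρprob ε B hε (q k)
      (q k ^ s) K hqk (Nat.one_le_pow _ _ hqk)
      (fun i hi x => aux_birkhoff f C hd hp hC α p (q k) s hqk hpc happ i hi x) hK0' hK1
    have h2 : (measureComplexity T ρ (q k ^ s) ε : ℝ) ≤ (K:ℝ)^2 * q k := by
      calc (measureComplexity T ρ (q k ^ s) ε : ℝ) ≤ (((K * q k) * K : ℕ):ℝ) := by exact_mod_cast h1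
        _ = _ := by push_cast; ring
    have h3 : ((q k ^ s : ℕ):ℝ) ^ τ = (q k : ℝ)^(s * τ) := by
      push_cast; rw [← Real.rpow_natCast, ← Real.rpow_mul hq0.le]
    rw [h3, div_le_iff₀ (by positivity), mul_assoc, ← Real.rpow_add hq0]
    simpa using h2
  have hfreq : ∀ δ > 0, ∃ᶠ n : ℕ in atTop, (measureComplexity T ρ n ε : ℝ) / (n:ℝ) ^ τ < δ := by
    intro δ hδ
    have htend : Tendsto (fun m : ℕ => (K:ℝ)^2 * (m:ℝ) ^ (-(s * τ - 1))) atTop (nhds 0) := by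
      have := ((tendsto_rpow_neg_atTop hexp).comp tendsto_natCast_atTop_atTop).const_mul ((K:ℝ)^2)
      simpa using this
    obtain ⟨m0, hm0⟩ := eventually_atTop.mp (htend.eventually (gt_mem_nhds hδ))
    rw [frequently_atTop]
    intro N
    obtain ⟨k, hk, hkN⟩ := hEinf.exists_gt (max N m0 + 1)
    have hk1 : 1 < k := by rw [hE] at hk; exact hk.1
    have hqk := hqpos k hk1
    refine ⟨q k ^ s, ?_, (hbound k hk).trans_lt (hm0 _ (by omega))⟩
    have : q k ≤ q k ^ s := Nat.le_self_pow (by omega) _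
    show N ≤ _
    omega
  show Filter.liminf (fun n : ℕ => (measureComplexity T ρ n ε : ℝ) / (n:ℝ) ^ τ) atTop = 0
  have hcob : ∀ b : ℝ, (∀ᶠ n : ℕ in atTop, b ≤ (measureComplexity T ρ n ε : ℝ) / (n:ℝ) ^ τ) → b ≤ 0 := by
    intro b hb
    by_contra hb0
    push Not at hb0
    obtain ⟨n, h1, h2⟩ := ((hfreq b hb0).and_eventually hb).exists
    linarith
  rw [Filter.liminf_eq]
  apply le_antisymm
  · exact csSup_le ⟨0, Eventually.of_forall hnn⟩ hcob
  · exact le_csSup ⟨0, hcob⟩ (Eventually.of_forall hnn)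
end
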